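/- Let V ∈ L¹(0,1) with ∫₀¹ V(t)dt = 0, and let f(u) = u²(2u⁴ − 6u³ + 5u² − 1). Define A₀ = ∫₀¹ f(u) (∫_u¹ V(t)V(t−u) dt) du, where V is extended 1-periodically. If V is real-valued with Fourier coefficients V̂ₙ = ∫₀¹ V(t)e^{−2πint}dt (so V̂₀ = 0), then A₀ = ∑_{n≠0} |V̂ₙ|² · (6!·2)/(2·(2πn)⁶) = 720 ∑_{n≠0} |V̂ₙ|²/(2πn)⁶. In particular A₀ > 0 whenever V ≢ 0. -/

import Mathlib

open MeasureTheory

lemma aux_bern (x : ℝ) : bernoulliFun 6 x = x^6-3*x^5+5/2*x^4-1/2*x^2+1/42 := by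
  have h5 : bernoulli' 5 = 0 := bernoulli'_eq_zero_of_odd (by decide) (by norm_num)
  have h6 : bernoulli' 6 = 1/42 := by
    have c : Nat.choose 6 2 = 15 := by decide
    have c3 : Nat.choose 6 3 = 20 := by decide
    have c4 : Nat.choose 6 4 = 15 := by decide
    have c5 : Nat.choose 6 5 = 6 := by decide
    rw [bernoulli'_def]
    norm_num [Finset.sum_range_succ, h5, c, c3, c4, c5]
  have c : Nat.choose 6 2 = 15 := by decide
  have c3 : Nat.choose 6 3 = 20 := by decide
  have c4 : Nat.choose 6 4 = 15 := by decide
  have c5 : Nat.choose 6 5 = 6 := by decide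
  have b2 : bernoulli 2 = 1/6 := by
    rw [bernoulli_eq_bernoulli'_of_ne_one (by norm_num), bernoulli'_two]
  have b3 : bernoulli 3 = 0 := by
    rw [bernoulli_eq_bernoulli'_of_ne_one (by norm_num), bernoulli'_three]
  have b4 : bernoulli 4 = -1/30 := by
    rw [bernoulli_eq_bernoulli'_of_ne_one (by norm_num), bernoulli'_four]
  have b5 : bernoulli 5 = 0 := by
    rw [bernoulli_eq_bernoulli'_of_ne_one (by norm_num), h5]
  have b6 : bernoulli 6 = 1/42 := by
    rw [bernoulli_eq_bernoulli'_of_ne_one (by norm_num), h6]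
  simp [bernoulliFun, Polynomial.bernoulli, Finset.sum_range_succ,  Polynomial.eval_monomial, c, c3, c4, c5, b2, b3, b4, b5, b6]
  ring

noncomputable def auxc (n : ℤ) : ℝ := 1440 / (2 * Real.pi * n) ^ 6

noncomputable def auxe (n : ℤ) (x : ℝ) : ℂ := Complex.exp (2 * Real.pi * Complex.I * n * x)

lemma auxe_add (n : ℤ) (x y : ℝ) : auxe n (x + y) = auxe n x * auxe n y := by
  simp only [auxe, ← Complex.exp_add]; congr 1; push_cast; ring

lemma auxe_neg (n : ℤ) (x : ℝ) : auxe (-n) x = auxe n (-x) := by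
  simp only [auxe]; congr 1; push_cast; ring

lemma auxe_norm (n : ℤ) (x : ℝ) : ‖auxe n x‖ = 1 := by
  have : auxe n x = Complex.exp ((2 * Real.pi * n * x : ℝ) * Complex.I) := by
    simp only [auxe]; congr 1; push_cast; ring
  rw [this, Complex.norm_exp_ofReal_mul_I]

lemma auxe_conj (n : ℤ) (x : ℝ) : (starRingEnd ℂ) (auxe n x) = auxe n (-x) := by
  simp only [auxe, ← Complex.exp_conj]; congr 1
  simp only [map_mul, Complex.conj_ofReal, Complex.conj_I, map_ofNat, map_intCast, Complex.ofReal_neg]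
  ring

lemma auxe_cont (n : ℤ) : Continuous (auxe n) := by
  unfold auxe; fun_prop

lemma auxc_summable : Summable auxc := by
  have h : Summable (fun n : ℤ => 1 / (n:ℝ) ^ 6) := Real.summable_one_div_int_pow.2 (by norm_num)
  have := h.mul_left (1440 / (2 * Real.pi) ^ 6)
  refine this.congr fun n => ?_
  unfold auxc
  rw [mul_pow (2 * Real.pi), div_mul_div_comm, mul_one]

lemma auxc_neg (n : ℤ) : auxc (-n) = auxc n := by
  unfold auxc; push_cast; congr 1; ring

lemma auxc_nonneg (n : ℤ) : 0 ≤ auxc n := by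
  unfold auxc; positivity

lemma aux_kernel {x : ℝ} (hx : x ∈ Set.Icc (0:ℝ) 1) :
    HasSum (fun n : ℤ => (auxc n : ℂ) * auxe n x)
      ((x ^ 2 * (2 * x ^ 4 - 6 * x ^ 3 + 5 * x ^ 2 - 1) + 1/21 : ℝ) : ℂ) := by
  have h := (hasSum_one_div_pow_mul_fourier_mul_bernoulliFun (k := 6) (by norm_num) hx).mul_left
    (1440 / (2 * Real.pi) ^ 6 : ℂ)
  have ef : (fun n : ℤ => (auxc n : ℂ) * auxe n x) = (fun n : ℤ =>
      (1440 / (2 * Real.pi) ^ 6 : ℂ) * (1 / (n:ℂ) ^ 6 * fourier n (x : UnitAddCircle))) := by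
    ext n
    rw [fourier_coe_apply, auxc, auxe, ← mul_assoc]
    push_cast
    rw [mul_pow (2 * (Real.pi:ℂ)), div_mul_div_comm, mul_one, div_one]
  rw [ef]
  convert h using 1
  · rfl
  rw [aux_bern]
  have : (Real.pi : ℂ) ≠ 0 := by exact_mod_cast Real.pi_ne_zero
  have hI : Complex.I ^ 6 = -1 := by
    rw [show 6 = 2 * 3 by norm_num, pow_mul, Complex.I_sq]; norm_num
  rw [mul_pow _ Complex.I, hI]
  push_cast
  simp only [Nat.factorial]
  field_simp
  push_cast
  ring

noncomputable def auxh (x : ℝ) : ℝ := (Set.Ioc (0:ℝ) 1).indicator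
  (fun x => x ^ 2 * (2 * x ^ 4 - 6 * x ^ 3 + 5 * x ^ 2 - 1)) x

lemma aux_kernel2 {t s : ℝ} (ht : t ∈ Set.Ioc (0:ℝ) 1) (hs : s ∈ Set.Ioc (0:ℝ) 1) :
    HasSum (fun n : ℤ => (auxc n : ℂ) * auxe n (t - s))
      ((auxh (t - s) + auxh (s - t) + 1/21 : ℝ) : ℂ) := by
  rcases lt_trichotomy s t with h | h | h
  · have h1 : t - s ∈ Set.Ioc (0:ℝ) 1 := ⟨by linarith, by linarith [ht.2, hs.1]⟩
    have h2 : s - t ∉ Set.Ioc (0:ℝ) 1 := fun h' => by linarith [h'.1]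
    have := aux_kernel (Set.Ioc_subset_Icc_self h1)
    simpa only [auxh, Set.indicator_of_mem h1, Set.indicator_of_notMem h2, add_zero] using this
  · subst h
    have := aux_kernel (x := 0) (by simp)
    simpa [auxh] using this
  · have h1 : s - t ∈ Set.Ioc (0:ℝ) 1 := ⟨by linarith, by linarith [hs.2, ht.1]⟩
    have h2 : t - s ∉ Set.Ioc (0:ℝ) 1 := fun h' => by linarith [h'.1]
    have := aux_kernel (Set.Ioc_subset_Icc_self h1)
    rw [← (Equiv.neg ℤ).hasSum_iff] at this
    have h3 : ((fun n : ℤ => (auxc n : ℂ) * auxe n (s - t)) ∘ (Equiv.neg ℤ)) =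
        (fun n : ℤ => (auxc n : ℂ) * auxe n (t - s)) := by
      ext n
      simp [auxc_neg, auxe_neg]
    rw [h3] at this
    simpa only [auxh, Set.indicator_of_mem h1, Set.indicator_of_notMem h2, zero_add] using this

lemma auxh_meas : Measurable auxh :=
  Measurable.indicator (by fun_prop) measurableSet_Ioc

lemma auxh_bdd (x : ℝ) : ‖auxh x‖ ≤ 14 := by
  unfold auxh
  by_cases h : x ∈ Set.Ioc (0:ℝ) 1
  · rw [Set.indicator_of_mem h, Real.norm_eq_abs]
    have h0 := h.1.le
    have h1 := h.2
    have e : ∀ k : ℕ, 0 ≤ x ^ k ∧ x ^ k ≤ 1 := fun k => ⟨pow_nonneg h0 k, pow_le_one₀ h0 h1⟩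
    rw [show x ^ 2 * (2 * x ^ 4 - 6 * x ^ 3 + 5 * x ^ 2 - 1)
      = 2 * x ^ 6 - 6 * x ^ 5 + 5 * x ^ 4 - x ^ 2 by ring, abs_le]
    constructor <;> linarith [e 6, e 5, e 4, e 2, (e 6).1, (e 5).1, (e 4).1, (e 2).1,
      (e 6).2, (e 5).2, (e 4).2, (e 2).2]
  · rw [Set.indicator_of_notMem h]; norm_num

/-- the double integral -/
lemma aux_double (W : ℝ → ℝ) (hW : Integrable W) :
    (∫ u, auxh u * ∫ t, W t * W (t - u)) = ∫ p : ℝ × ℝ, auxh (p.1 - p.2) * (W p.1 * W p.2) := by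
  have i1 : Integrable (fun p : ℝ × ℝ => W p.2 * W (p.2 - p.1)) (volume.prod volume) := by
    have := Integrable.convolution_integrand (ContinuousLinearMap.mul ℝ ℝ) hW hW.comp_neg
    simpa using this
  have i2 : Integrable (fun p : ℝ × ℝ => auxh p.1 * (W p.2 * W (p.2 - p.1)))
      (volume.prod volume) :=
    i1.bdd_mul (auxh_meas.comp measurable_fst).aestronglyMeasurable
      (Filter.Eventually.of_forall fun p => auxh_bdd p.1)
  have i3 : Integrable (fun p : ℝ × ℝ => auxh (p.1 - p.2) * (W p.1 * W p.2))
      (volume.prod volume) :=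
    (hW.mul_prod hW).bdd_mul
      (auxh_meas.comp (measurable_fst.sub measurable_snd)).aestronglyMeasurable
      (Filter.Eventually.of_forall fun p => auxh_bdd _)
  rw [Measure.volume_eq_prod, integral_prod _ i3]
  simp_rw [← integral_const_mul]
  rw [integral_integral_swap i2]
  congr 1; ext t
  rw [← integral_sub_left_eq_self _ volume t]
  simp

lemma aux_double' (W : ℝ → ℝ) :
    (∫ p : ℝ × ℝ, auxh (p.1 - p.2) * (W p.1 * W p.2)) =
     ∫ p : ℝ × ℝ, auxh (p.2 - p.1) * (W p.1 * W p.2) := by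
  rw [Measure.volume_eq_prod, ← integral_prod_swap]
  congr 1; ext p; simp [mul_comm]

lemma aux_main (W : ℝ → ℝ) (hW : Integrable W) (hs : ∀ x, x ∉ Set.Ioc (0:ℝ) 1 → W x = 0)
    (h0 : ∫ t, W t = 0) :
    HasSum (fun n : ℤ => auxc n * ‖∫ t, (W t : ℂ) * auxe n (-t)‖ ^ 2)
      (2 * ∫ u, auxh u * ∫ t, W t * W (t - u)) := by
  have hWc : Integrable (fun t => (W t : ℂ)) := hW.ofReal
  have ie : ∀ n : ℤ, ∀ σ : ℝ → ℝ, Continuous σ →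
      Integrable (fun t => (W t : ℂ) * auxe n (σ t)) := fun n σ hσ =>
    hWc.mul_bdd (c := 1) ((auxe_cont n).comp hσ).aestronglyMeasurable
      (Filter.Eventually.of_forall fun t => (auxe_norm _ _).le)
  let F : ℤ → ℝ × ℝ → ℂ := fun n p =>
    (auxc n : ℂ) * (((W p.1 : ℂ) * auxe n p.1) * ((W p.2 : ℂ) * auxe n (-p.2)))
  have iF : ∀ n, Integrable (F n) (volume.prod volume) := fun n =>
    ((ie n (fun t => t) continuous_id).mul_prod (ie n (fun t => -t) continuous_neg)).const_mul _
  have nF : ∀ n p, ‖F n p‖ = auxc n * (‖W p.1‖ * ‖W p.2‖) := by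
    intro n p
    simp only [F, norm_mul, auxe_norm, mul_one, Complex.norm_real]
    rw [Real.norm_of_nonneg (auxc_nonneg n)]
  have sF : Summable (fun n => ∫ p, ‖F n p‖ ∂(volume.prod volume)) := by
    simp_rw [nF, integral_const_mul]
    exact auxc_summable.mul_right _
  have key := hasSum_integral_of_summable_integral_norm iF sF
  have e1 : ∀ n, ∫ p, F n p ∂(volume.prod volume) =
      ((auxc n * ‖∫ t, (W t : ℂ) * auxe n (-t)‖ ^ 2 : ℝ) : ℂ) := by
    intro n
    simp only [F]
    rw [integral_const_mul, integral_prod_mul (fun t => (W t : ℂ) * auxe n t)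
      (fun t => (W t : ℂ) * auxe n (-t))]
    have : (∫ t, (W t : ℂ) * auxe n t) =
        (starRingEnd ℂ) (∫ t, (W t : ℂ) * auxe n (-t)) := by
      rw [← integral_conj]
      congr 1; ext t
      rw [map_mul, auxe_conj, Complex.conj_ofReal, neg_neg]
    rw [this, Complex.conj_mul']
    push_cast; rfl
  have e2 : ∀ p : ℝ × ℝ, ∑' n, F n p =
      ((auxh (p.1 - p.2) * (W p.1 * W p.2) + auxh (p.2 - p.1) * (W p.1 * W p.2)
        + 1/21 * (W p.1 * W p.2) : ℝ) : ℂ) := by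
    intro p
    by_cases h1 : p.1 ∈ Set.Ioc (0:ℝ) 1
    · by_cases h2 : p.2 ∈ Set.Ioc (0:ℝ) 1
      · have := ((aux_kernel2 h1 h2).mul_right ((W p.1 : ℂ) * W p.2)).tsum_eq
        have e : (fun n => F n p) =
            fun n => (auxc n : ℂ) * auxe n (p.1 - p.2) * ((W p.1 : ℂ) * W p.2) := by
          ext n; simp only [F]; rw [sub_eq_add_neg, auxe_add]; ring
        rw [e, this]; push_cast; ring
      · simp [F, hs _ h2]
    · simp [F, hs _ h1]
  have iWW : Integrable (fun p : ℝ × ℝ => W p.1 * W p.2) (volume.prod volume) := hW.mul_prod hW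
  have i3 : Integrable (fun p : ℝ × ℝ => auxh (p.1 - p.2) * (W p.1 * W p.2))
      (volume.prod volume) :=
    iWW.bdd_mul
      (auxh_meas.comp (measurable_fst.sub measurable_snd)).aestronglyMeasurable
      (Filter.Eventually.of_forall fun p => auxh_bdd _)
  have i4 : Integrable (fun p : ℝ × ℝ => auxh (p.2 - p.1) * (W p.1 * W p.2))
      (volume.prod volume) :=
    iWW.bdd_mul
      (auxh_meas.comp (measurable_snd.sub measurable_fst)).aestronglyMeasurable
      (Filter.Eventually.of_forall fun p => auxh_bdd _)
  simp_rw [e1, e2] at key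
  rw [integral_complex_ofReal] at key
  have key' := Complex.hasSum_ofReal.1 key
  convert key' using 1
  rw [integral_add (f := fun p : ℝ × ℝ => auxh (p.1 - p.2) * (W p.1 * W p.2)
    + auxh (p.2 - p.1) * (W p.1 * W p.2)) (i3.add i4) (iWW.const_mul _), integral_add i3 i4, integral_const_mul,
    integral_prod_mul W W, h0, aux_double W hW]
  have := aux_double' W
  rw [Measure.volume_eq_prod] at this ⊢
  rw [← this]; ring

lemma aux_unique (W : ℝ → ℝ) (hW : Integrable W) (hs : ∀ x, x ∉ Set.Ioc (0:ℝ) 1 → W x = 0)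
    (h : ∀ n : ℤ, ∫ t, (W t : ℂ) * auxe n (-t) = 0) : ∀ᵐ t, W t = 0 := by
  have hWc : Integrable (fun t => (W t : ℂ)) := hW.ofReal
  have ib : ∀ g : C(AddCircle (1:ℝ), ℂ),
      Integrable (fun t : ℝ => g (t : AddCircle (1:ℝ)) * (W t : ℂ)) := fun g =>
    hWc.bdd_mul (c := ‖g‖) (g.continuous.comp (AddCircle.continuous_mk' 1)).aestronglyMeasurable
      (Filter.Eventually.of_forall fun t => g.norm_coe_le_norm _)
  let L : C(AddCircle (1:ℝ), ℂ) →ₗ[ℂ] ℂ :=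
    { toFun := fun g => ∫ t : ℝ, g (t : AddCircle (1:ℝ)) * (W t : ℂ)
      map_add' := fun g k => by
        rw [← integral_add (ib g) (ib k)]; congr 1; ext t; simp [add_mul]
      map_smul' := fun c g => by
        simp only [ContinuousMap.smul_apply, smul_eq_mul, RingHom.id_apply, mul_assoc]
        rw [integral_const_mul] }
  let L' : C(AddCircle (1:ℝ), ℂ) →L[ℂ] ℂ := L.mkContinuous (∫ t, ‖(W t : ℂ)‖) (by
    intro g
    calc ‖∫ t : ℝ, g (t : AddCircle (1:ℝ)) * (W t : ℂ)‖
        ≤ ∫ t : ℝ, ‖g‖ * ‖(W t : ℂ)‖ := by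
          refine norm_integral_le_of_norm_le (hWc.norm.const_mul _)
            (Filter.Eventually.of_forall fun t => ?_)
          rw [norm_mul]
          exact mul_le_mul_of_nonneg_right (g.norm_coe_le_norm _) (norm_nonneg _)
      _ = _ := by rw [integral_const_mul, mul_comm])
  have hL : ∀ g : C(AddCircle (1:ℝ), ℂ), ∫ t : ℝ, g (t : AddCircle (1:ℝ)) * (W t : ℂ) = 0 := by
    have h1 : (Submodule.span ℂ (Set.range (fourier (T := 1)))).topologicalClosure ≤
        LinearMap.ker (L' : C(AddCircle (1:ℝ), ℂ) →ₗ[ℂ] ℂ) := by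
      apply Submodule.topologicalClosure_minimal
      · rw [Submodule.span_le]
        rintro _ ⟨n, rfl⟩
        change ∫ t : ℝ, fourier n (t : AddCircle (1:ℝ)) * (W t : ℂ) = 0
        rw [← h (-n)]
        congr 1; ext t
        rw [fourier_coe_apply, mul_comm, auxe_neg, neg_neg, auxe]
        simp
      · exact L'.isClosed_ker
    haveI : Fact ((0:ℝ) < 1) := ⟨one_pos⟩
    rw [span_fourier_closure_eq_top] at h1
    intro g
    exact h1 (Submodule.mem_top (x := g))
  have h2 := IsOpen.ae_eq_zero_of_integral_contDiff_smul_eq_zero (μ := volume) (f := W)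
    (U := Set.Ioo (0:ℝ) 1) isOpen_Ioo (hW.locallyIntegrable.locallyIntegrableOn _) (by
      intro g hg _ hsupp
      haveI : Fact ((0:ℝ) < 1) := ⟨one_pos⟩
      have hz : ∀ x, x ∉ Set.Ioo (0:ℝ) 1 → g x = 0 := fun x hx =>
        image_eq_zero_of_notMem_tsupport fun h' => hx (hsupp h')
      have g0 : g 0 = 0 := hz 0 (by simp)
      have g1 : g 1 = 0 := hz 1 (by simp)
      let G : C(AddCircle (1:ℝ), ℂ) := ⟨AddCircle.liftIco 1 0 (fun x => (g x : ℂ)),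
        AddCircle.liftIco_zero_continuous (by simp [g0, g1])
          (Complex.continuous_ofReal.comp hg.continuous).continuousOn⟩
      have h3 := hL G
      have h4 : ∀ t : ℝ, G (t : AddCircle (1:ℝ)) * (W t : ℂ) = ((g t * W t : ℝ) : ℂ) := by
        intro t
        by_cases ht : t ∈ Set.Ioc (0:ℝ) 1
        · rcases eq_or_lt_of_le ht.2 with rfl | h5
          · have : ((1:ℝ) : AddCircle (1:ℝ)) = ((0:ℝ) : AddCircle (1:ℝ)) := by
              simp
            rw [this]
            change AddCircle.liftIco 1 0 (fun x => (g x : ℂ)) _ * _ = _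
            rw [AddCircle.liftIco_coe_apply (by simp)]
            simp [g0, g1]
          · change AddCircle.liftIco 1 0 (fun x => (g x : ℂ)) _ * _ = _
            rw [AddCircle.liftIco_coe_apply ⟨ht.1.le, by simpa using h5⟩]
            simp
        · simp [hs _ ht]
      simp_rw [h4] at h3
      rw [integral_complex_ofReal] at h3
      simpa using h3)
  have h1 : ∀ᵐ t : ℝ, t ≠ 1 := Measure.ae_ne volume 1
  filter_upwards [h1, h2] with t ht1 ht2
  by_cases ht : t ∈ Set.Ioc (0:ℝ) 1
  · exact ht2 ⟨ht.1, lt_of_le_of_ne ht.2 ht1⟩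
  · exact hs _ ht


/-- Fourier representation and positivity of
`A₀ = ∫₀¹ f(u) ∫_u¹ V(t)V(t−u) dt du` for mean-zero 1-periodic `V`. -/
theorem stmt_13 (V : ℝ → ℝ)
    (hper : ∀ t : ℝ, V (t + 1) = V t)
    (hint : MeasureTheory.IntegrableOn V (Set.Icc 0 1))
    (hmean : (∫ t in (0:ℝ)..1, V t) = 0)
    (f : ℝ → ℝ) (hf : ∀ u : ℝ, f u = u ^ 2 * (2 * u ^ 4 - 6 * u ^ 3 + 5 * u ^ 2 - 1))
    (A0 : ℝ)
    (hA0 : A0 = ∫ u in (0:ℝ)..1, f u * ∫ t in u..1, V t * V (t - u))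
    (Vhat : ℤ → ℂ)
    (hVhat : ∀ n : ℤ, Vhat n =
      ∫ t in (0:ℝ)..1, (V t : ℂ) * Complex.exp (-2 * Real.pi * Complex.I * n * t)) :
    A0 = 720 * ∑' n : ℤ, ‖Vhat n‖ ^ 2 / (2 * Real.pi * n) ^ 6 ∧
    (¬ (∀ᵐ t ∂MeasureTheory.volume, t ∈ Set.Icc (0:ℝ) 1 → V t = 0) → 0 < A0) := by
  have hint' : IntegrableOn V (Set.Ioc 0 1) := hint.mono_set Set.Ioc_subset_Icc_self
  set W : ℝ → ℝ := (Set.Ioc (0:ℝ) 1).indicator V with hWdef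
  have hW : Integrable W := (integrable_indicator_iff measurableSet_Ioc).2 hint'
  have hs : ∀ x, x ∉ Set.Ioc (0:ℝ) 1 → W x = 0 := fun x hx => Set.indicator_of_notMem hx _
  have h0 : ∫ t, W t = 0 := by
    rw [hWdef, integral_indicator measurableSet_Ioc,
      ← intervalIntegral.integral_of_le zero_le_one, hmean]
  have hV : ∀ n, Vhat n = ∫ t, (W t : ℂ) * auxe n (-t) := by
    intro n
    rw [hVhat, intervalIntegral.integral_of_le zero_le_one,
      ← integral_indicator measurableSet_Ioc]
    congr 1; ext t
    by_cases ht : t ∈ Set.Ioc (0:ℝ) 1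
    · simp only [hWdef, Set.indicator_of_mem ht, auxe]
      congr 2; push_cast; ring
    · simp only [hWdef, Set.indicator_of_notMem ht]; simp
  have hA : A0 = ∫ u, auxh u * ∫ t, W t * W (t - u) := by
    rw [hA0, intervalIntegral.integral_of_le zero_le_one,
      ← integral_indicator measurableSet_Ioc]
    congr 1; ext u
    by_cases hu : u ∈ Set.Ioc (0:ℝ) 1
    · simp only [auxh, Set.indicator_of_mem hu, hf]
      congr 1
      rw [intervalIntegral.integral_of_le hu.2, ← integral_indicator measurableSet_Ioc]
      congr 1; ext t
      by_cases ht : t ∈ Set.Ioc u 1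
      · have ht1 : t ∈ Set.Ioc (0:ℝ) 1 := ⟨hu.1.trans ht.1, ht.2⟩
        have ht2 : t - u ∈ Set.Ioc (0:ℝ) 1 := ⟨by linarith [ht.1], by linarith [ht.2, hu.1]⟩
        simp only [hWdef, Set.indicator_of_mem ht, Set.indicator_of_mem ht1,
          Set.indicator_of_mem ht2]
      · rw [Set.indicator_of_notMem ht]
        by_cases ht1 : t ∈ Set.Ioc (0:ℝ) 1
        · have ht2 : t - u ∉ Set.Ioc (0:ℝ) 1 := fun h' => ht ⟨by linarith [h'.1], ht1.2⟩
          rw [hs _ ht2, mul_zero]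
        · rw [hs _ ht1, zero_mul]
    · simp only [auxh, Set.indicator_of_notMem hu, zero_mul]
  have key := aux_main W hW hs h0
  rw [← hA] at key
  simp_rw [← hV] at key
  have key2 : HasSum (fun n : ℤ => 720 * (‖Vhat n‖ ^ 2 / (2 * Real.pi * n) ^ 6)) A0 := by
    have ef : (fun n : ℤ => 720 * (‖Vhat n‖ ^ 2 / (2 * Real.pi * n) ^ 6)) =
        fun n : ℤ => 1 / 2 * (auxc n * ‖Vhat n‖ ^ 2) := by
      ext n; unfold auxc; ring
    rw [ef, show A0 = 1 / 2 * (2 * A0) by ring]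
    exact key.mul_left (1/2)
  refine ⟨by rw [← tsum_mul_left, key2.tsum_eq], fun hne => ?_⟩
  have hex : ∃ n, Vhat n ≠ 0 := by
    by_contra hcon
    push Not at hcon
    apply hne
    have hz := aux_unique W hW hs (fun n => by rw [← hV, hcon])
    have h1 : ∀ᵐ t : ℝ, t ≠ 0 := Measure.ae_ne volume 0
    filter_upwards [hz, h1] with t ht ht0 htm
    have : t ∈ Set.Ioc (0:ℝ) 1 := ⟨lt_of_le_of_ne htm.1 (Ne.symm ht0), htm.2⟩
    rwa [hWdef, Set.indicator_of_mem this] at ht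
  obtain ⟨n, hn⟩ := hex
  have hn0 : n ≠ 0 := by
    rintro rfl
    apply hn
    rw [hV]
    simp only [auxe, Int.cast_zero, mul_zero, zero_mul, Complex.exp_zero, mul_one]
    rw [integral_complex_ofReal, h0, Complex.ofReal_zero]
  have hn0' : (n : ℝ) ≠ 0 := by exact_mod_cast hn0
  rw [← key2.tsum_eq]
  refine key2.summable.tsum_pos (fun m => by positivity) n ?_
  have : 0 < ‖Vhat n‖ := norm_pos_iff.2 hn
  have h6 : 0 < (2 * Real.pi * n) ^ 6 := by
    have : 2 * Real.pi * n ≠ 0 := by positivity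
    exact Even.pow_pos (by decide) this
  positivity
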